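/- arXiv:2307.03350 — 3 statements merged into one kernel-verified Lean document; each statement's English description precedes it below -/
import Mathlib

section
/- Let α, β > 0 with αβ = π². Then √α·(γ/4 − log(4β)/4 + ∑_{n=1}^∞ d(n)·K₀(2nα)) = √β·(γ/4 − log(4α)/4 + ∑_{n=1}^∞ d(n)·K₀(2nβ)). -/
/-!
The formula is a symmetry under `c ↦ -c` after writing `α = π exp c`, `β = π exp (-c)`.

Let `ψ(x) = ∑_{n ≥ 1} exp (-π n² x)` and `φ(s) = ψ(exp s)`. From `2 K₀(z) = ∫_ℝ exp (-z cosh s) ds`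
and a translation of `s` by `log (m / n)` one gets
`2 K₀(2 π m n exp c) = ∫_ℝ exp (-π m² exp (c + s)) exp (-π n² exp (c - s)) ds`. Summing over all
pairs `(m, n)` yields (`tsum_besselK0`)
`∑ d(n) K₀(2 n α) = I(c) = ∫_0^∞ φ(c + s) φ(c - s) ds`.

Jacobi's transformation of the theta function reads
`φ(-s) = exp (s / 2) φ(s) + (exp (s / 2) - 1) / 2` (`phi_neg`). Inserting it into the factors
`φ(c - s)` and `φ(-c - s)`, the quadratic terms cancel in `exp c * I(c) - I(-c)`, and what remains is
a combination of `P(x) = ∫_x^∞ φ(s) exp (s / 2) ds` and `Q(x) = ∫_x^∞ φ(s) ds` at `x = ±c`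
(`I_sub_I`). The combination `P(c) + Q(-c)` is elementary (`P_add_Q`): its derivative is given by
Jacobi's transformation, and its value at `c = 0` is the completed zeta value
`Λ₀(1) = (γ - log (4 π)) / 2 + 1` (`P_add_Q_zero`).
-/

/-- The modified Bessel function of the second kind of order zero, `K₀(z)`, for real `z > 0`,
defined by its standard integral representation. -/
noncomputable def besselK0 (z : ℝ) : ℝ :=
  ∫ t in Set.Ioi (1 : ℝ), Real.exp (-(z * t)) * (t ^ 2 - 1) ^ (-(1 / 2) : ℝ)

open MeasureTheory Set Real Filter Asymptotics

namespace Koshliakov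

/-! ### The theta function in the variable `exp s` -/

/-- The theta series `φ(s) = ∑_{n ≥ 1} exp (-π n² exp s) = (θ (exp s) - 1) / 2`, encoded through the
kernel `θ = cosKernel 0` of Mathlib; the series itself is `hasSum_phi`. -/
noncomputable def phi (s : ℝ) : ℝ := (HurwitzZeta.cosKernel 0 (exp s) - 1) / 2

lemma hasSum_phi (s : ℝ) : HasSum (fun n : ℕ ↦ exp (-π * (n + 1) ^ 2 * exp s)) (phi s) := by
  have h := (HurwitzZeta.hasSum_nat_cosKernel₀ 0 (exp_pos s)).div_const 2
  simpa [phi] using h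

lemma phi_nonneg (s : ℝ) : 0 ≤ phi s := (hasSum_phi s).nonneg fun _ ↦ (exp_pos _).le

lemma continuous_phi : Continuous phi := by
  have h : Continuous fun s ↦ HurwitzZeta.cosKernel 0 (exp s) :=
    (HurwitzZeta.continuousOn_cosKernel 0).comp_continuous continuous_exp fun s ↦ exp_pos s
  unfold phi
  fun_prop

/-- Jacobi's transformation `θ (1 / x) = √x θ x`, at `x = exp s`. -/
lemma cosKernel_exp_neg (s : ℝ) :
    HurwitzZeta.cosKernel 0 (exp (-s)) = exp (s / 2) * HurwitzZeta.cosKernel 0 (exp s) := by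
  have h := HurwitzZeta.evenKernel_functional_equation 0 (exp (-s))
  rw [HurwitzZeta.evenKernel_eq_cosKernel_of_zero] at h
  rw [h, ← exp_mul, one_div, one_div (exp (-s)), ← exp_neg, ← exp_neg, neg_neg]
  congr 2
  ring

lemma phi_neg (s : ℝ) : phi (-s) = exp (s / 2) * phi s + (exp (s / 2) - 1) / 2 := by
  rw [phi, phi, cosKernel_exp_neg]
  ring

/-- The decay is doubly exponential; the rate `exp (-2 s)` is enough for all integrals below. -/
lemma phi_isBigO : phi =O[atTop] fun s ↦ exp (-2 * s) := by
  obtain ⟨p, hp, h⟩ := HurwitzZeta.isBigO_atTop_cosKernel_sub 0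
  have h2 := (h.trans (isLittleO_exp_neg_mul_rpow_atTop hp (-2)).isBigO).comp_tendsto
    tendsto_exp_atTop
  have h3 : phi =O[atTop] fun s ↦ exp s ^ (-2 : ℝ) := by
    refine (h2.const_mul_left (1 / 2)).congr_left fun s ↦ ?_
    simp only [phi, Function.comp]
    ring
  refine h3.congr_right fun s ↦ ?_
  rw [← exp_mul]; ring_nf

lemma integrableOn_phi (c : ℝ) : IntegrableOn phi (Ioi c) :=
  integrable_of_isBigO_exp_neg two_pos continuous_phi.continuousOn phi_isBigO

lemma integrableOn_phi_mul_exp (c : ℝ) : IntegrableOn (fun s ↦ phi s * exp (s / 2)) (Ioi c) := by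
  refine integrable_of_isBigO_exp_neg one_pos
    (continuous_phi.mul (by fun_prop)).continuousOn ?_
  refine (phi_isBigO.mul (isBigO_refl (fun s : ℝ ↦ exp (s / 2)) atTop)).trans ?_
  refine IsBigO.of_bound 1 ((eventually_ge_atTop 0).mono fun s hs ↦ ?_)
  rw [← exp_add, norm_of_nonneg (exp_pos _).le, norm_of_nonneg (exp_pos _).le, one_mul, exp_le_exp]
  linarith

lemma integrableOn_phi_mul_phi (c : ℝ) :
    IntegrableOn (fun s ↦ phi (c + s) * phi (c - s)) (Ioi 0) := by
  -- By `phi_neg`, `φ (c - s)` is `O (exp (s / 2))`; the cruder `O (exp s)` suffices.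
  have h1 : (fun s ↦ phi (c + s)) =O[atTop] fun s ↦ exp (-2 * s) := by
    refine (phi_isBigO.comp_tendsto (tendsto_atTop_add_const_left atTop c tendsto_id)).trans ?_
    refine IsBigO.of_bound (exp (-2 * c)) (Eventually.of_forall fun s ↦ ?_)
    simp only [Function.comp, id]
    rw [norm_of_nonneg (exp_pos _).le, norm_of_nonneg (exp_pos _).le, ← exp_add, mul_add]
  have h0 : phi =O[atTop] fun _ ↦ (1 : ℝ) := by
    refine phi_isBigO.trans (IsBigO.of_bound 1 ((eventually_ge_atTop 0).mono fun s hs ↦ ?_))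
    rw [norm_of_nonneg (exp_pos _).le, norm_one, mul_one, exp_le_one_iff]
    linarith
  have h2 : (fun s ↦ phi (c - s)) =O[atTop] fun s ↦ exp s := by
    have e : (fun s ↦ phi (c - s)) = fun s ↦ exp ((s - c) / 2) * phi (s - c)
        + (exp ((s - c) / 2) - 1) / 2 := by
      funext s
      rw [← phi_neg, neg_sub]
    rw [e]
    have h3 : (fun s : ℝ ↦ exp ((s - c) / 2)) =O[atTop] fun s ↦ exp s := by
      refine IsBigO.of_bound (exp (-c / 2)) ((eventually_ge_atTop 0).mono fun s hs ↦ ?_)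
      rw [norm_of_nonneg (exp_pos _).le, norm_of_nonneg (exp_pos _).le, ← exp_add, exp_le_exp]
      linarith
    have h4 : (fun _ : ℝ ↦ (1 : ℝ)) =O[atTop] fun s ↦ exp s := by
      refine IsBigO.of_bound 1 ((eventually_ge_atTop 0).mono fun s hs ↦ ?_)
      rw [norm_of_nonneg (exp_pos _).le, norm_one, one_mul]
      exact one_le_exp hs
    have h5 := h3.mul (h0.comp_tendsto (tendsto_atTop_add_const_right atTop (-c) tendsto_id))
    simp only [Function.comp_def, id, mul_one, ← sub_eq_add_neg] at h5
    refine h5.add ?_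
    simpa [div_eq_inv_mul] using (h3.sub h4).const_mul_left (2⁻¹)
  refine integrable_of_isBigO_exp_neg one_pos ?_ ((h1.mul h2).congr_right fun s ↦ ?_)
  · exact ((continuous_phi.comp (by fun_prop)).mul (continuous_phi.comp (by fun_prop))).continuousOn
  · rw [← exp_add]; ring_nf

/-! ### Incomplete Mellin integrals of the theta function -/

/-- `∫_{exp c}^∞ ψ(v) v^{-1/2} dv`, where `ψ (exp s) = φ s`. -/
noncomputable def P (c : ℝ) : ℝ := ∫ s in Ioi c, phi s * exp (s / 2)

/-- `∫_{exp c}^∞ ψ(v) v⁻¹ dv`, where `ψ (exp s) = φ s`. -/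
noncomputable def Q (c : ℝ) : ℝ := ∫ s in Ioi c, phi s

/-- Riemann's integral for the entire completed zeta function `Λ₀`, taken at `1`, where its value is
known. The part of the Mellin integral over `(0, 1)` becomes `Q 0` by Jacobi's transformation. -/
lemma P_add_Q_zero : P 0 + Q 0 = (eulerMascheroniConstant - log (4 * π)) / 2 + 1 := by
  have key : ((P 0 + Q 0 : ℝ) : ℂ) = completedRiemannZeta₀ 1 := by
    rw [completedRiemannZeta₀, HurwitzZeta.completedHurwitzZetaEven₀, WeakFEPair.Λ₀, mellin,
      ← range_exp, ← image_univ, integral_image_eq_integral_abs_deriv_smul MeasurableSet.univ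
        (fun x _ ↦ (hasDerivAt_exp x).hasDerivWithinAt) exp_injective.injOn]
    -- `h` is the integrand of `Λ₀` in the variable `s`; Mathlib's modified kernel subtracts `1` for
    -- `s > 0` and `exp (-s / 2)` for `s < 0`.
    set h : ℝ → ℝ := fun s ↦ if 0 < s then 2 * (phi s * exp (s / 2)) else 2 * phi (-s) with hh
    have e : ∀ᵐ s : ℝ, |exp s| • ((exp s : ℂ) ^ ((1 : ℂ) / 2 - 1) •
        (HurwitzZeta.hurwitzEvenFEPair 0).f_modif (exp s)) = (h s : ℂ) := by
      filter_upwards [Measure.ae_ne volume 0] with s hs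
      have e1 : (exp s : ℂ) ^ ((1 : ℂ) / 2 - 1) = (exp (-(s / 2)) : ℝ) := by
        rw [show (1 : ℂ) / 2 - 1 = ((-(1 / 2) : ℝ) : ℂ) by push_cast; ring,
          ← Complex.ofReal_cpow (exp_pos s).le, ← exp_mul]
        ring_nf
      rw [e1, abs_exp]
      rcases lt_or_gt_of_ne hs with hs | hs
      · simp only [WeakFEPair.f_modif, HurwitzZeta.hurwitzEvenFEPair, Pi.add_apply, hh,
          if_neg hs.not_gt]
        rw [indicator_of_notMem (by simp [hs.le]), indicator_of_mem (by simp [exp_pos, hs]),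
          HurwitzZeta.evenKernel_eq_cosKernel_of_zero, phi, cosKernel_exp_neg, ← exp_mul]
        simp only [Function.comp, smul_eq_mul, Complex.real_smul]
        norm_cast
        rw [show s * -(1 / 2) = - (s / 2) by ring, exp_neg]
        have h3 : exp s = exp (s / 2) * exp (s / 2) := by rw [← exp_add]; ring_nf
        have := exp_pos (s / 2)
        field_simp
        rw [h3]
        ring
      · simp only [WeakFEPair.f_modif, HurwitzZeta.hurwitzEvenFEPair, Pi.add_apply, hh,
          if_pos hs, if_true]
        rw [indicator_of_mem (by simp [hs]), indicator_of_notMem (by simp [hs.le]),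
          HurwitzZeta.evenKernel_eq_cosKernel_of_zero, phi]
        simp only [Function.comp, smul_eq_mul, Complex.real_smul]
        norm_cast
        rw [exp_neg]
        have h3 : exp s = exp (s / 2) * exp (s / 2) := by rw [← exp_add]; ring_nf
        have := exp_pos (s / 2)
        field_simp
        rw [h3]
        ring
    rw [Measure.restrict_univ, integral_congr_ae e, integral_complex_ofReal]
    have hI : ∫ s in Ioi 0, h s = 2 * P 0 := by
      rw [P, ← integral_const_mul]
      exact setIntegral_congr_fun measurableSet_Ioi fun s hs ↦ if_pos hs
    have hI' : ∫ s in Iic 0, h s = 2 * Q 0 := by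
      have := integral_comp_neg_Iic 0 phi
      rw [neg_zero] at this
      rw [Q, ← this, ← integral_const_mul]
      exact setIntegral_congr_fun measurableSet_Iic fun s hs ↦ if_neg (not_lt.2 hs)
    have i1 : IntegrableOn h (Ioi 0) :=
      IntegrableOn.congr_fun ((integrableOn_phi_mul_exp 0).const_mul 2)
        (fun s hs ↦ (if_pos hs).symm) measurableSet_Ioi
    have i2 : IntegrableOn h (Iic 0) := by
      have : IntegrableOn (fun s ↦ phi (-s)) (Iic 0) :=
        IntegrableOn.comp_neg_Iic (f := phi) (c := 0) (by
          rw [neg_zero, integrableOn_Ici_iff_integrableOn_Ioi]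
          exact integrableOn_phi 0)
      exact IntegrableOn.congr_fun (this.const_mul 2) (fun s hs ↦ (if_neg (not_lt.2 hs)).symm)
        measurableSet_Iic
    rw [← intervalIntegral.integral_Iic_add_Ioi i2 i1, hI, hI']
    push_cast
    ring
  have hlog : Complex.log (4 * π) = (log (4 * π) : ℝ) := by
    rw [Complex.ofReal_log (by positivity)]
    push_cast
    rfl
  rw [completedRiemannZeta₀_one, hlog] at key
  exact_mod_cast key

/-- By `phi_neg`, the left side has derivative `φ(-c) - φ(c) exp (c / 2) = (exp (c / 2) - 1) / 2`. -/
lemma P_add_Q (c : ℝ) :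
    P c + Q (-c) = (eulerMascheroniConstant - log (4 * π)) / 2 - c / 2 + exp (c / 2) := by
  have h1 : P 0 - P c = ∫ s in (0)..c, phi s * exp (s / 2) :=
    intervalIntegral.integral_Ioi_sub_Ioi' (integrableOn_phi_mul_exp 0) (integrableOn_phi_mul_exp c)
  have h2 : Q (-c) - Q 0 = ∫ s in (0)..c, phi (-s) := by
    rw [intervalIntegral.integral_comp_neg, neg_zero]
    exact intervalIntegral.integral_Ioi_sub_Ioi' (integrableOn_phi (-c)) (integrableOn_phi 0)
  have h3 : (∫ s in (0)..c, phi (-s)) - ∫ s in (0)..c, phi s * exp (s / 2)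
      = exp (c / 2) - 1 - c / 2 := by
    rw [← intervalIntegral.integral_sub]
    · have hd : ∀ s ∈ uIcc 0 c, HasDerivAt (fun s ↦ exp (s / 2) - s / 2)
          (phi (-s) - phi s * exp (s / 2)) s := fun s _ ↦ by
        have := ((hasDerivAt_id s).div_const 2).exp.sub ((hasDerivAt_id s).div_const 2)
        refine this.congr_deriv ?_
        rw [phi_neg]
        simp only [id]
        ring
      rw [intervalIntegral.integral_eq_sub_of_hasDerivAt hd]
      · simp
        ring
      · exact ((continuous_phi.comp continuous_neg).sub
          (continuous_phi.mul (by fun_prop))).intervalIntegrable _ _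
    · exact (continuous_phi.comp continuous_neg).intervalIntegrable _ _
    · exact (continuous_phi.mul (by fun_prop)).intervalIntegrable _ _
  have := P_add_Q_zero
  linarith

/-! ### The symmetry of the theta integral -/

/-- `∫_1^∞ ψ(a u) ψ(a / u) du / u` for `a = exp c` and `ψ (exp s) = φ s`; it equals the Koshliakov
series `∑ d(n) K₀(2 π n a)`, see `tsum_besselK0`. -/
noncomputable def I (c : ℝ) : ℝ := ∫ s in Ioi 0, phi (c + s) * phi (c - s)

lemma integrableOn_comp_add {f : ℝ → ℝ} (c : ℝ) (hf : IntegrableOn f (Ioi c)) :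
    IntegrableOn (fun s ↦ f (s + c)) (Ioi 0) := by
  have := (measurePreserving_add_right volume c).integrableOn_comp_preimage
    (measurableEmbedding_addRight c) (f := f) (s := Ioi c)
  have h2 := this.2 hf
  simpa [Function.comp_def] using h2

lemma integral_comp_add (f : ℝ → ℝ) (c : ℝ) :
    ∫ s in Ioi 0, f (s + c) = ∫ s in Ioi c, f s := by
  have := (measurePreserving_add_right volume c).setIntegral_preimage_emb
    (measurableEmbedding_addRight c) f (Ioi c)
  simpa using this

/-- Applying `phi_neg` to the factors `φ(±c - s)` makes the products of two values of `φ` cancel in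
the difference, leaving only integrals of `φ`. -/
lemma I_sub_I (c : ℝ) :
    exp c * I c - I (-c) = (P c - exp c * Q c - exp c * P (-c) + Q (-c)) / 2 := by
  have iP := fun c ↦ integrableOn_comp_add c (integrableOn_phi_mul_exp c)
  have iQ := fun c ↦ integrableOn_comp_add c (integrableOn_phi c)
  have eP := fun c ↦ integral_comp_add (fun s ↦ phi s * exp (s / 2)) c
  have eQ := fun c ↦ integral_comp_add phi c
  simp only [I, P, Q]
  simp only [← eP, ← eQ, ← integral_const_mul]
  have i1 : IntegrableOn (fun s ↦ phi (s + c) * exp ((s + c) / 2) - exp c * phi (s + c)) (Ioi 0) :=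
    (iP c).sub ((iQ c).const_mul _)
  have i2 : IntegrableOn (fun s ↦ phi (s + c) * exp ((s + c) / 2) - exp c * phi (s + c)
      - exp c * (phi (s + -c) * exp ((s + -c) / 2))) (Ioi 0) :=
    i1.sub ((iP (-c)).const_mul _)
  rw [← integral_sub ((integrableOn_phi_mul_phi c).const_mul _) (integrableOn_phi_mul_phi (-c)),
    ← integral_sub (iP c) ((iQ c).const_mul _), ← integral_sub i1 ((iP (-c)).const_mul _),
    ← integral_add i2 (iQ (-c)), ← integral_div]
  refine setIntegral_congr_fun measurableSet_Ioi fun s _ ↦ ?_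
  have h1 := phi_neg (s + -c)
  have h2 := phi_neg (s + c)
  have h3 : exp ((s + c) / 2) = exp c * exp ((s + -c) / 2) := by
    rw [← exp_add]; ring_nf
  rw [show c - s = -(s + -c) by ring, show -c - s = -(s + c) by ring, h1, h2, h3,
    add_comm c s, add_comm (-c) s]
  ring

lemma main_symm (c : ℝ) :
    exp c * ((eulerMascheroniConstant - log (4 * π)) / 4 + c / 4 + I c) =
      (eulerMascheroniConstant - log (4 * π)) / 4 - c / 4 + I (-c) := by
  have h1 := I_sub_I c
  have h2 := P_add_Q c
  have h3 := P_add_Q (-c)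
  rw [neg_neg] at h3
  have h4 : exp c * exp (-c / 2) = exp (c / 2) := by rw [← exp_add]; ring_nf
  linear_combination h1 + h2 / 2 - exp c / 2 * h3 - h4 / 2

/-! ### Bessel functions and the divisor sum -/

lemma lintegral_even {f : ℝ → ENNReal} (hf : ∀ s, f (-s) = f s) :
    ∫⁻ s, f s = 2 * ∫⁻ s in Ioi 0, f s := by
  have h := lintegral_add_compl (μ := volume) f (measurableSet_Ioi (a := (0 : ℝ)))
  have h2 : ∫⁻ s in Iio 0, f s = ∫⁻ s in Ioi 0, f s := by
    have := (Measure.measurePreserving_neg (volume : Measure ℝ)).setLIntegral_comp_preimage_emb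
      (MeasurableEquiv.neg ℝ).measurableEmbedding f (Ioi 0)
    simpa [hf] using this
  rw [← h, compl_Ioi, setLIntegral_congr Iio_ae_eq_Iic.symm, h2, two_mul]

/-- `∫_ℝ exp (-z cosh s) ds = 2 K₀(z)` as an extended nonnegative real, so that sums and integrals
can be interchanged freely. -/
noncomputable def K (z : ℝ) : ENNReal := ∫⁻ s : ℝ, ENNReal.ofReal (exp (-(z * cosh s)))

lemma cosh_image : cosh '' Ioi 0 = Ioi 1 := by
  ext t
  constructor
  · rintro ⟨s, hs, rfl⟩
    exact one_lt_cosh.2 (ne_of_gt hs)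
  · intro ht
    refine ⟨arcosh t, arcosh_pos ht, cosh_arcosh ht.le⟩

/-- The substitution `t = cosh s`. -/
lemma besselK0_eq (z : ℝ) : besselK0 z = (K z).toReal / 2 := by
  have hE : K z = 2 * ∫⁻ s in Ioi 0, ENNReal.ofReal (exp (-(z * cosh s))) :=
    lintegral_even fun s ↦ by rw [cosh_neg]
  have hS : ∫⁻ t in Ioi 1, ENNReal.ofReal (exp (-(z * t)) * (t ^ 2 - 1) ^ (-(1 / 2) : ℝ)) =
      ∫⁻ s in Ioi 0, ENNReal.ofReal (exp (-(z * cosh s))) := by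
    rw [← cosh_image, lintegral_image_eq_lintegral_abs_deriv_mul measurableSet_Ioi
      (fun s _ ↦ (hasDerivAt_cosh s).hasDerivWithinAt)
      (cosh_strictMonoOn.injOn.mono Ioi_subset_Ici_self)]
    refine setLIntegral_congr_fun measurableSet_Ioi fun s hs ↦ ?_
    have h1 : 0 < sinh s := sinh_pos_iff.2 hs
    have h2 : (cosh s ^ 2 - 1) ^ (-(1 / 2) : ℝ) = (sinh s)⁻¹ := by
      rw [cosh_sq, add_sub_cancel_right, rpow_neg (by positivity), ← sqrt_eq_rpow, sqrt_sq h1.le]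
    rw [← ENNReal.ofReal_mul (abs_nonneg _), abs_of_pos h1, h2]
    congr 1
    field_simp
  rw [besselK0, integral_eq_lintegral_of_nonneg_ae, hS, hE, ENNReal.toReal_mul]
  · simp
  · filter_upwards [ae_restrict_mem measurableSet_Ioi] with t ht
    have : (1 : ℝ) < t := ht
    have : 0 ≤ t ^ 2 - 1 := by nlinarith
    simp only [Pi.zero_apply]
    positivity
  · exact (by fun_prop : Measurable fun t : ℝ ↦
      exp (-(z * t)) * (t ^ 2 - 1) ^ (-(1 / 2) : ℝ)).aestronglyMeasurable

/-- The translation `s ↦ s + log (m / n)` splits `exp (-2 m n π a cosh s)`, with `a = exp c`, into a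
product of a factor depending on `m` only and one depending on `n` only. -/
lemma K_mul (c : ℝ) (m n : ℕ+) : K (2 * ((m * n : ℕ) : ℝ) * (π * exp c)) =
    ∫⁻ s : ℝ, ENNReal.ofReal (exp (-π * m ^ 2 * exp (c + s))) *
      ENNReal.ofReal (exp (-π * n ^ 2 * exp (c - s))) := by
  have hm : (0 : ℝ) < m := by exact_mod_cast m.pos
  have hn : (0 : ℝ) < n := by exact_mod_cast n.pos
  rw [K, ← lintegral_add_right_eq_self _ (log (m / n))]
  refine lintegral_congr fun s ↦ ?_
  rw [← ENNReal.ofReal_mul (exp_pos _).le, ← exp_add]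
  congr 2
  rw [cosh_eq, neg_add, exp_add, exp_add, exp_neg (log _), exp_log (by positivity), sub_eq_add_neg,
    exp_add, exp_add]
  push_cast
  field_simp
  ring

lemma ofReal_phi (s : ℝ) :
    ENNReal.ofReal (phi s) = ∑' n : ℕ+, ENNReal.ofReal (exp (-π * n ^ 2 * exp s)) := by
  rw [← (hasSum_phi s).tsum_eq, ENNReal.ofReal_tsum_of_nonneg (fun _ ↦ (exp_pos _).le)
    (hasSum_phi s).summable,
    tsum_pnat_eq_tsum_succ (f := fun n : ℕ ↦ ENNReal.ofReal (exp (-π * n ^ 2 * exp s)))]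
  push_cast
  rfl

/-- Writing `d(n)` as the number of pairs with product `n` turns the divisor sum into a double sum
over `(m, n)`, whose terms factor by `K_mul`. -/
lemma tsum_K (c : ℝ) : ∑' n : ℕ+, ((n : ℕ).divisors.card : ENNReal) *
      K (2 * ((n : ℕ) : ℝ) * (π * exp c)) =
    ∫⁻ s : ℝ, ENNReal.ofReal (phi (c + s) * phi (c - s)) := by
  calc _ = ∑' n : ℕ+, ∑' p : Nat.divisorsAntidiagonal n,
        K (2 * ((p.1.1 * p.1.2 : ℕ) : ℝ) * (π * exp c)) := by
        refine tsum_congr fun n ↦ ?_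
        have : ∀ p : Nat.divisorsAntidiagonal n, K (2 * ((p.1.1 * p.1.2 : ℕ) : ℝ) * (π * exp c)) =
            K (2 * ((n : ℕ) : ℝ) * (π * exp c)) := fun p ↦ by
          rw [(Nat.mem_divisorsAntidiagonal.1 p.2).1]
        rw [tsum_congr this, tsum_fintype, Finset.sum_const, Finset.card_univ, Fintype.card_coe,
          nsmul_eq_mul, ← Nat.map_div_right_divisors, Finset.card_map]
    _ = ∑' p : ℕ+ × ℕ+, K (2 * ((p.1 * p.2 : ℕ) : ℝ) * (π * exp c)) := by
        rw [← ENNReal.tsum_sigma, ← sigmaAntidiagonalEquivProd.tsum_eq]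
        rfl
    _ = ∑' m : ℕ+, ∑' n : ℕ+, K (2 * ((m * n : ℕ) : ℝ) * (π * exp c)) := ENNReal.tsum_prod'
    _ = _ := by
        simp_rw [K_mul]
        rw [tsum_congr fun m ↦ (lintegral_tsum fun n ↦ by fun_prop).symm,
          ← lintegral_tsum fun n ↦ by fun_prop]
        refine lintegral_congr fun s ↦ ?_
        rw [ENNReal.ofReal_mul (phi_nonneg _), ofReal_phi, ofReal_phi, ← ENNReal.tsum_mul_right]
        simp_rw [ENNReal.tsum_mul_left]

lemma tsum_besselK0 (c : ℝ) : ∑' n : ℕ, ((n + 1 : ℕ).divisors.card : ℝ) *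
      besselK0 (2 * (n + 1) * (π * exp c)) = I c := by
  have hint := integrableOn_phi_mul_phi c
  have hE : ∫⁻ s : ℝ, ENNReal.ofReal (phi (c + s) * phi (c - s)) =
      2 * ∫⁻ s in Ioi 0, ENNReal.ofReal (phi (c + s) * phi (c - s)) :=
    lintegral_even fun s ↦ by rw [sub_neg_eq_add, ← sub_eq_add_neg, mul_comm]
  have hI : ∫⁻ s : ℝ, ENNReal.ofReal (phi (c + s) * phi (c - s)) = 2 * ENNReal.ofReal (I c) := by
    rw [hE, I, ofReal_integral_eq_lintegral_ofReal hint
      (Eventually.of_forall fun s ↦ mul_nonneg (phi_nonneg _) (phi_nonneg _))]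
  have hI0 : 0 ≤ I c := integral_nonneg fun s ↦ mul_nonneg (phi_nonneg _) (phi_nonneg _)
  have hT := tsum_K c
  rw [hI, tsum_pnat_eq_tsum_succ (f := fun n : ℕ ↦ (n.divisors.card : ENNReal) *
      K (2 * (n : ℝ) * (π * exp c)))] at hT
  -- The total is finite, hence so is every term, which is what passing to real sums requires.
  have hne := ENNReal.ne_top_of_tsum_ne_top
    (hT.trans_ne (ENNReal.mul_ne_top (by simp) ENNReal.ofReal_ne_top))
  have hR := congrArg ENNReal.toReal hT
  rw [ENNReal.tsum_toReal_eq hne, ENNReal.toReal_mul, ENNReal.toReal_ofReal hI0] at hR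
  have : ∀ n : ℕ, ((n + 1 : ℕ).divisors.card : ℝ) * besselK0 (2 * (n + 1) * (π * exp c)) =
      (((n + 1 : ℕ).divisors.card : ENNReal) *
        K (2 * ((n + 1 : ℕ) : ℝ) * (π * exp c))).toReal / 2 := fun n ↦ by
    rw [besselK0_eq, ENNReal.toReal_mul, ENNReal.toReal_natCast]
    push_cast
    ring
  rw [tsum_congr this, tsum_div_const, hR]
  simp

end Koshliakov

theorem koshliakov_formula
    (α β : ℝ) (hα : 0 < α) (hβ : 0 < β) (hαβ : α * β = Real.pi ^ 2) :
    Real.sqrt α * (Real.eulerMascheroniConstant / 4 - Real.log (4 * β) / 4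
        + ∑' n : ℕ, ((n + 1 : ℕ).divisors.card : ℝ) * besselK0 (2 * (n + 1) * α)) =
      Real.sqrt β * (Real.eulerMascheroniConstant / 4 - Real.log (4 * α) / 4
        + ∑' n : ℕ, ((n + 1 : ℕ).divisors.card : ℝ) * besselK0 (2 * (n + 1) * β)) := by
  -- With `α = π exp c`, the relation `α β = π ^ 2` makes `β` the value at `-c`.
  obtain ⟨c, rfl⟩ : ∃ c, α = π * exp c :=
    ⟨log (α / π), by rw [exp_log (by positivity)]; field_simp⟩
  obtain rfl : β = π * exp (-c) := by
    rw [exp_neg]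
    have := exp_pos c
    have := pi_pos
    field_simp
    nlinarith
  rw [Koshliakov.tsum_besselK0, Koshliakov.tsum_besselK0]
  have hl : ∀ x : ℝ, log (4 * (π * exp x)) = log (4 * π) + x := fun x ↦ by
    rw [← mul_assoc, log_mul (by positivity) (exp_pos x).ne', log_exp]
  have hs : √(π * exp c) = √(π * exp (-c)) * exp c := by
    rw [← sqrt_sq (exp_pos c).le, ← sqrt_mul (by positivity), sqrt_sq (exp_pos c).le,
      exp_neg]
    congr 1
    have := exp_pos c
    field_simp
  rw [hl, hl, hs]
  linear_combination √(π * exp (-c)) * Koshliakov.main_symm c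
end

section
/- Let α, β > 0 with αβ = π². Then ∑_{n=1}^∞ 1/(n(e^{2αn} + 1)) + 2·∑_{n=1}^∞ 1/((2n−1)(e^{β(2n−1)} − 1)) = α/4 − log 2 − (1/4)·log(α/β). -/
/-!
Put `L(t) = ∑_{n ≥ 1} 1 / (n (e^{tn} - 1))` for `t > 0`. Expanding the geometric series and
interchanging the sums gives `L(t) = -∑_{k ≥ 1} log (1 - e^{-tk})`, so that
`η(it / 2π) = exp (-t/24 - L(t))` for the Dedekind eta function. The transformation law
`η(-1/z) = √(z/i) η(z)`, which Mathlib provides, thus becomes, for `ab = π²`,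
`L(2a) - L(2b) = (1/2) log (a/π) - a/12 + b/12` (`lambert_transform`).

On the other side, `1/(e^x + 1) = 1/(e^x - 1) - 2/(e^{2x} - 1)` turns the first sum into
`L(2α) - 2 L(4α)`, and removing the even terms from `L(β)` turns the second one into
`L(β) - L(2β)/2`. The theorem follows from the transformation law for `(a, b) = (α, β)` and for
`(a, b) = (2α, β/2)`.
-/

/-- The Lambert series `L(t) = ∑_{n ≥ 1} 1 / (n (e^{tn} - 1))`, indexed from `n = 0`. -/
noncomputable def lambert (t : ℝ) : ℝ :=
  ∑' n : ℕ, 1 / (((n : ℝ) + 1) * (Real.exp (t * (n + 1)) - 1))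

/-- The `n`-th term of `L(t)` as a geometric series. -/
lemma lambert_hasSum_inner {t : ℝ} (ht : 0 < t) (n : ℕ) :
    HasSum (fun k : ℕ => Real.exp (-(t * (k + 1))) ^ (n + 1) / ((n : ℝ) + 1))
      (1 / (((n : ℝ) + 1) * (Real.exp (t * (n + 1)) - 1))) := by
  have hpos : 0 < t * ((n : ℝ) + 1) := by positivity
  have hlt : Real.exp (-(t * ((n : ℝ) + 1))) < 1 := Real.exp_lt_one_iff.mpr (by linarith)
  have h := ((hasSum_geometric_of_lt_one (Real.exp_pos _).le hlt).mul_left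
    (Real.exp (-(t * ((n : ℝ) + 1))))).div_const ((n : ℝ) + 1)
  have h1 : 1 < Real.exp (t * ((n : ℝ) + 1)) := Real.one_lt_exp_iff.mpr hpos
  convert! h using 1
  · funext k
    rw [← Real.exp_nat_mul, ← Real.exp_nat_mul, ← Real.exp_add]
    congr 2
    push_cast
    ring
  · rw [Real.exp_neg]
    have h2 : Real.exp (t * ((n : ℝ) + 1)) - 1 ≠ 0 := by linarith
    have h3 : 1 - (Real.exp (t * ((n : ℝ) + 1)))⁻¹ ≠ 0 := by
      rw [← Real.exp_neg]; linarith
    have h4 : ((n : ℝ) + 1) ≠ 0 := by positivity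
    field_simp

lemma lambert_summable {t : ℝ} (ht : 0 < t) :
    Summable fun n : ℕ => 1 / (((n : ℝ) + 1) * (Real.exp (t * (n + 1)) - 1)) := by
  -- Since `e^x - 1 ≥ e^x (1 - e^{-t})` for `x ≥ t`, a geometric series dominates.
  have hq : Real.exp (-t) < 1 := Real.exp_lt_one_iff.mpr (by linarith)
  have hs := ((summable_nat_add_iff 1).mpr
    (summable_geometric_of_lt_one (Real.exp_pos (-t)).le hq)).mul_left (1 - Real.exp (-t))⁻¹
  refine Summable.of_nonneg_of_le (fun n => ?_) (fun n => ?_) hs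
  · have : 1 < Real.exp (t * ((n : ℝ) + 1)) := Real.one_lt_exp_iff.mpr (by positivity)
    have : 0 < Real.exp (t * ((n : ℝ) + 1)) - 1 := by linarith
    positivity
  · have hc : 0 < 1 - Real.exp (-t) := by linarith
    have e1 : Real.exp (-t) ^ (n + 1) = (Real.exp (t * ((n : ℝ) + 1)))⁻¹ := by
      rw [← Real.exp_nat_mul, ← Real.exp_neg]
      congr 1
      push_cast
      ring
    have h2 : 1 ≤ Real.exp (-t) * Real.exp (t * ((n : ℝ) + 1)) := by
      rw [← Real.exp_add]
      apply Real.one_le_exp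
      nlinarith [(Nat.cast_nonneg n : (0 : ℝ) ≤ n)]
    rw [e1, ← mul_inv, one_div]
    apply inv_anti₀ (by positivity)
    have h3 : (1 : ℝ) ≤ (n : ℝ) + 1 := by linarith [(Nat.cast_nonneg n : (0 : ℝ) ≤ n)]
    have h4 : 0 ≤ Real.exp (t * ((n : ℝ) + 1)) - 1 := by
      linarith [Real.one_le_exp (show 0 ≤ t * ((n : ℝ) + 1) by positivity)]
    nlinarith

/-- Tonelli for double series, with both families of inner sums named. -/
lemma hasSum_swap_of_nonneg {F : ℕ → ℕ → ℝ} {f g : ℕ → ℝ} (h0 : ∀ n k, 0 ≤ F n k)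
    (hf : ∀ n, HasSum (F n) (f n)) (hfs : Summable f)
    (hg : ∀ k, HasSum (fun n => F n k) (g k)) : HasSum g (∑' n, f n) := by
  have hFs : Summable fun p : ℕ × ℕ => F p.1 p.2 := by
    refine (summable_prod_of_nonneg fun p => h0 p.1 p.2).mpr ⟨fun n => (hf n).summable, ?_⟩
    exact hfs.congr fun n => (hf n).tsum_eq.symm
  have hsum : HasSum (fun p : ℕ × ℕ => F p.1 p.2) (∑' n, f n) := by
    have h := hFs.tsum_prod' fun n => (hf n).summable
    rw [tsum_congr fun n => (hf n).tsum_eq] at h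
    exact h ▸ hFs.hasSum
  have hswap : HasSum (fun p : ℕ × ℕ => F p.2 p.1) (∑' n, f n) :=
    (Equiv.prodComm ℕ ℕ).hasSum_iff.mpr hsum
  exact hswap.prod_fiberwise hg

/-- `L(t) = -∑_{k ≥ 1} log (1 - e^{-tk})`, by summing the double series in the other order. -/
lemma lambert_hasSum_log {t : ℝ} (ht : 0 < t) :
    HasSum (fun k : ℕ => Real.log (1 - Real.exp (-(t * ((k : ℝ) + 1))))) (-lambert t) := by
  have h := hasSum_swap_of_nonneg
    (g := fun k : ℕ => -Real.log (1 - Real.exp (-(t * ((k : ℝ) + 1)))))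
    (fun n k => by positivity) (lambert_hasSum_inner ht) (lambert_summable ht) (fun k => by
      have hlt : |Real.exp (-(t * ((k : ℝ) + 1)))| < 1 := by
        rw [abs_of_pos (Real.exp_pos _)]
        have : 0 < t * ((k : ℝ) + 1) := by positivity
        exact Real.exp_lt_one_iff.mpr (by linarith)
      exact Real.hasSum_pow_div_log_of_abs_lt_one hlt)
  simpa only [neg_neg, lambert] using h.neg

/-- On the imaginary axis, `η(is / π) = e^{-s/12 - L(2s)}`. -/
lemma eta_eq_exp_lambert {s : ℝ} (hs : 0 < s) :
    ModularForm.eta (Complex.I * (s / Real.pi : ℝ)) =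
      (Real.exp (-s / 12 - lambert (2 * s)) : ℝ) := by
  have hpi : (Real.pi : ℂ) ≠ 0 := by exact_mod_cast Real.pi_ne_zero
  have h1 : HasProd (fun k : ℕ => 1 - Real.exp (-(2 * s * ((k : ℝ) + 1))))
      (Real.exp (-lambert (2 * s))) := by
    have h := (lambert_hasSum_log (t := 2 * s) (by positivity)).rexp
    refine h.congr_fun ?_
    intro k
    have : 0 < 2 * s * ((k : ℝ) + 1) := by positivity
    have : Real.exp (-(2 * s * ((k : ℝ) + 1))) < 1 := Real.exp_lt_one_iff.mpr (by linarith)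
    simp only [Function.comp]
    rw [Real.exp_log (by linarith)]
  have h2 : HasProd (fun k : ℕ => 1 - ModularForm.eta_q k (Complex.I * (s / Real.pi : ℝ)))
      (Real.exp (-lambert (2 * s)) : ℝ) := by
    have h := h1.map Complex.ofRealHom Complex.continuous_ofReal
    rw [Complex.ofRealHom_eq_coe] at h
    convert h using 1
    funext k
    simp only [ModularForm.eta_q_eq_cexp, Function.comp, Complex.ofRealHom_eq_coe]
    push_cast
    congr 2
    field_simp
    linear_combination (s : ℂ) * Complex.I_sq
  rw [ModularForm.eta, h2.tprod_eq, sub_eq_add_neg, Real.exp_add]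
  push_cast
  congr 1
  rw [Function.Periodic.qParam]
  congr 1
  push_cast
  field_simp
  linear_combination (24 * (s : ℂ)) * Complex.I_sq

/-- The transformation law of `L`: the logarithm of `η(-1/z) = √(z/i) η(z)` at `z = ia/π`. -/
lemma lambert_transform {a b : ℝ} (ha : 0 < a) (hb : 0 < b) (hab : a * b = Real.pi ^ 2) :
    lambert (2 * a) - lambert (2 * b) =
      1 / 2 * Real.log (a / Real.pi) - a / 12 + b / 12 := by
  have hpi := Real.pi_pos
  have hap : 0 < a / Real.pi := by positivity
  have hmem : Complex.I * (a / Real.pi : ℝ) ∈ UpperHalfPlane.upperHalfPlaneSet := by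
    simpa [UpperHalfPlane.upperHalfPlaneSet] using hap
  have h := ModularForm.eta_comp_eq_csqrt_I_inv hmem
  have hinv : -1 / (Complex.I * (a / Real.pi : ℝ)) = Complex.I * (b / Real.pi : ℝ) := by
    have hb' : b / Real.pi = (a / Real.pi)⁻¹ := by
      field_simp
      linarith
    rw [hb', Complex.ofReal_inv]
    have : ((a / Real.pi : ℝ) : ℂ) ≠ 0 := by exact_mod_cast hap.ne'
    field_simp
    simp
  have hsqrt : Complex.sqrt (Complex.I * (a / Real.pi : ℝ)) =
      Complex.sqrt Complex.I * (Real.exp (1 / 2 * Real.log (a / Real.pi)) : ℝ) := by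
    have hne : ((a / Real.pi : ℝ) : ℂ) ≠ 0 := by exact_mod_cast hap.ne'
    rw [sqrt_eq_exp (mul_ne_zero Complex.I_ne_zero hne),
      sqrt_eq_exp Complex.I_ne_zero, mul_comm Complex.I, Complex.log_ofReal_mul hap
      Complex.I_ne_zero]
    rw [Complex.ofReal_exp, ← Complex.exp_add]
    congr 1
    push_cast
    ring
  have hI : Complex.sqrt Complex.I ≠ 0 := by
    rw [sqrt_eq_exp Complex.I_ne_zero]
    exact Complex.exp_ne_zero _
  simp only [Function.comp, Pi.smul_apply, Pi.mul_apply, smul_eq_mul] at h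
  rw [hinv, hsqrt, eta_eq_exp_lambert ha, eta_eq_exp_lambert hb, mul_assoc,
    inv_mul_cancel_left₀ hI, ← Complex.ofReal_mul, ← Real.exp_add] at h
  have h' := Real.exp_injective (Complex.ofReal_injective h)
  linarith

theorem ramanujan_log_dedekind_mixed
    (α β : ℝ) (hα : 0 < α) (hβ : 0 < β) (hαβ : α * β = Real.pi ^ 2) :
    (∑' n : ℕ, 1 / ((n + 1) * (Real.exp (2 * α * (n + 1)) + 1)))
    + 2 * ∑' n : ℕ, 1 / ((2 * (n + 1) - 1) * (Real.exp (β * (2 * (n + 1) - 1)) - 1)) =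
      α / 4 - Real.log 2 - 1 / 4 * Real.log (α / β) := by
  have hpi := Real.pi_pos
  have hfirst : (∑' n : ℕ, 1 / (((n : ℝ) + 1) * (Real.exp (2 * α * (n + 1)) + 1))) =
      lambert (2 * α) - 2 * lambert (2 * (2 * α)) := by
    have s1 := lambert_summable (t := 2 * α) (by positivity)
    have s2 := lambert_summable (t := 2 * (2 * α)) (by positivity)
    rw [lambert, lambert, ← tsum_mul_left, ← s1.tsum_sub (s2.mul_left 2)]
    refine tsum_congr fun n => ?_
    have hx : 1 < Real.exp (2 * α * ((n : ℝ) + 1)) := Real.one_lt_exp_iff.mpr (by positivity)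
    have hsq : Real.exp (2 * (2 * α) * ((n : ℝ) + 1)) = Real.exp (2 * α * ((n : ℝ) + 1)) ^ 2 := by
      rw [← Real.exp_nat_mul]
      congr 1
      push_cast
      ring
    rw [hsq]
    generalize Real.exp (2 * α * ((n : ℝ) + 1)) = x at hx
    have h1 : x - 1 ≠ 0 := by linarith
    have h2 : x + 1 ≠ 0 := by linarith
    have h3 : x ^ 2 - 1 = (x - 1) * (x + 1) := by ring
    have h4 : (n : ℝ) + 1 ≠ 0 := by positivity
    rw [h3]
    field_simp
    ring
  have hsecond : (∑' n : ℕ, 1 / ((2 * ((n : ℝ) + 1) - 1) *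
      (Real.exp (β * (2 * (n + 1) - 1)) - 1))) = lambert β - lambert (2 * β) / 2 := by
    have s1 := lambert_summable hβ
    have i0 : Function.Injective fun n : ℕ => 2 * n := fun a b h => by
      simpa using h
    have i1 : Function.Injective fun n : ℕ => 2 * n + 1 := fun a b h => by
      simpa using h
    have hsplit := tsum_even_add_odd
      (f := fun n : ℕ => 1 / (((n : ℝ) + 1) * (Real.exp (β * (n + 1)) - 1)))
      (s1.comp_injective i0) (s1.comp_injective i1)
    have hodd : (∑' n : ℕ, 1 / ((((2 * n + 1 : ℕ) : ℝ) + 1) *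
        (Real.exp (β * (((2 * n + 1 : ℕ) : ℝ) + 1)) - 1))) = lambert (2 * β) / 2 := by
      rw [lambert, ← tsum_div_const]
      refine tsum_congr fun n => ?_
      have e1 : ((2 * n + 1 : ℕ) : ℝ) + 1 = 2 * ((n : ℝ) + 1) := by push_cast; ring
      have e2 : β * (2 * ((n : ℝ) + 1)) = 2 * β * (n + 1) := by ring
      rw [e1, e2, div_div]
      congr 1
      ring
    have heven : (∑' n : ℕ, 1 / ((2 * ((n : ℝ) + 1) - 1) *
        (Real.exp (β * (2 * (n + 1) - 1)) - 1))) =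
        ∑' n : ℕ, 1 / ((((2 * n : ℕ) : ℝ) + 1) *
          (Real.exp (β * (((2 * n : ℕ) : ℝ) + 1)) - 1)) := by
      refine tsum_congr fun n => ?_
      have e1 : 2 * ((n : ℝ) + 1) - 1 = ((2 * n : ℕ) : ℝ) + 1 := by push_cast; ring
      rw [e1]
    rw [hodd] at hsplit
    rw [heven, lambert]
    linarith
  have t1 := lambert_transform hα hβ hαβ
  have t2 := lambert_transform (a := 2 * α) (b := β / 2) (by positivity) (by positivity)
    (by linarith)
  rw [mul_div_cancel₀ β (two_ne_zero' ℝ), mul_div_assoc,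
    Real.log_mul two_ne_zero (by positivity)] at t2
  -- `α / β = (α / π)²` because `αβ = π²`.
  have hlog : Real.log (α / β) = 2 * Real.log (α / Real.pi) := by
    have : α / β = (α / Real.pi) ^ 2 := by
      rw [div_pow, ← hαβ]
      field_simp
    rw [this, Real.log_pow]
    norm_num
  rw [hfirst, hsecond, hlog]
  linarith
end

section
/- The following two identities hold: ∑_{n=1}^∞ e^{2πn}/(e^{2πn} − 1)² = 1/24 − 1/(8π), and ∑_{n=1}^∞ e^{π(2n−1)}/(e^{π(2n−1)} + 1)² = 1/(8π). -/
/-!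
With `q = e^{2πiz}`, expanding `w / (1 - w)² = ∑ k wᵏ` turns the Lambert series
`∑_{n ≥ 1} qⁿ / (1 - qⁿ)²` into `∑ σ₁(n) qⁿ = (1 - E₂(z)) / 24` (`hasSum_lambert`). Both identities
thus reduce to special values of the weight-two Eisenstein series, which follow from its
quasi-modularity `E₂(-1/z) = z² E₂(z) + 6z / (πi)` and its 1-periodicity.

* At the fixed point `z = i` of `z ↦ -1/z` this forces `E₂(i) = 3/π`, which is the first identity.
* At `z = (1 + i)/2` one has `-1/z = i - 1`, so `E₂(-1/z) = E₂(i) = 3/π` and `E₂((1 + i)/2) = 6/π`.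
  Here `q = -e^{-π}`; the even-indexed terms of the Lambert series are those of the series at
  `z = i`, and the odd-indexed terms are the negatives of the terms of the second sum, which
  therefore equals `(E₂((1 + i)/2) - E₂(i)) / 24 = 1/(8π)`.
-/

open Complex EisensteinSeries ModularGroup
open UpperHalfPlane hiding I

/-- The `q`-expansion of `E₂` resummed as a Lambert series. -/
lemma hasSum_lambert (z : ℍ) (q : ℂ) (hq : q = cexp (2 * Real.pi * I * z)) :
    HasSum (fun n : ℕ => q ^ (n + 1) / (1 - q ^ (n + 1)) ^ 2) ((1 - E2 z) / 24) := by
  have hn : ‖q‖ < 1 := by rw [hq]; exact norm_exp_two_pi_I_lt_one z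
  have inner (d : ℕ+) : ∑' c : ℕ+, (c : ℂ) ^ 1 * q ^ (d * c : ℕ) =
      q ^ (d : ℕ) / (1 - q ^ (d : ℕ)) ^ 2 := by
    have hd : ‖q ^ (d : ℕ)‖ < 1 := by
      rw [norm_pow]; exact pow_lt_one₀ (norm_nonneg _) hn d.ne_zero
    have h := tsum_coe_mul_geometric_of_norm_lt_one hd
    rw [← tsum_zero_pnat_eq_tsum_nat
      (hasSum_coe_mul_geometric_of_norm_lt_one hd).summable] at h
    simpa [pow_mul] using h
  have hsum := (summable_prod_mul_pow 1 hn).prod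
  have htsum := tsum_prod_pow_eq_tsum_sigma 1 hn
  simp only [inner] at hsum htsum
  have hE : (1 - E2 z) / 24 = ∑' n : ℕ+, q ^ (n : ℕ) / (1 - q ^ (n : ℕ)) ^ 2 := by
    rw [htsum, E2_eq_tsum_cexp, hq]
    ring
  rw [hE, tsum_pnat_eq_tsum_succ (f := fun n : ℕ => q ^ n / (1 - q ^ n) ^ 2)]
  exact ((summable_pnat_iff_summable_succ (f := fun n : ℕ => q ^ n / (1 - q ^ n) ^ 2)).1
    hsum).hasSum

/-- The quasi-modularity of `E₂` under `S`, with `-1/z` named by a separate variable. -/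
lemma E2_S_transform (z w : ℍ) (h : (w : ℂ) = -1 / z) :
    E2 w = z ^ 2 * E2 z + 6 * z / (Real.pi * I) := by
  have hw : S • z = w := by
    ext
    rw [modular_S_smul, h]
    simp [neg_div]
  have hG := G2_S_transform z
  rw [hw] at hG
  have hz : (z : ℂ) ≠ 0 := z.ne_zero
  have hpi : (Real.pi : ℂ) ≠ 0 := by exact_mod_cast Real.pi_ne_zero
  simp only [E2, Pi.smul_apply, smul_eq_mul, riemannZeta_two]
  rw [hG]
  field_simp
  linear_combination (-2 * Real.pi * (z : ℂ)) * I_sq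

lemma E2_I : E2 UpperHalfPlane.I = 3 / Real.pi := by
  have hpi : (Real.pi : ℂ) ≠ 0 := by exact_mod_cast Real.pi_ne_zero
  have h := E2_S_transform UpperHalfPlane.I UpperHalfPlane.I (by simp)
  simp only [UpperHalfPlane.coe_I, I_sq] at h
  field_simp at h ⊢
  linear_combination h / 2

/-- The point `(1 + i)/2`, which `z ↦ -1/z` sends to `i - 1`. -/
noncomputable def halfPoint : ℍ := ⟨(1 + I) / 2, by simp⟩

/-- The translate `i - 1` of `i`. -/
noncomputable def shiftPoint : ℍ := ⟨I - 1, by simp⟩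

lemma E2_shiftPoint : E2 shiftPoint = 3 / Real.pi := by
  rw [← E2_I, E2_eq_tsum_cexp, E2_eq_tsum_cexp]
  have : cexp (2 * Real.pi * I * (shiftPoint : ℂ)) =
      cexp (2 * Real.pi * I * (UpperHalfPlane.I : ℂ)) := by
    rw [← exp_periodic.sub_eq (2 * Real.pi * I * (UpperHalfPlane.I : ℂ))]
    congr 1
    simp only [shiftPoint, UpperHalfPlane.coe_I]
    ring
  rw [this]

lemma E2_halfPoint : E2 halfPoint = 6 / Real.pi := by
  have hpi : (Real.pi : ℂ) ≠ 0 := by exact_mod_cast Real.pi_ne_zero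
  have hI : (1 + I : ℂ) ≠ 0 := fun h => by simpa using congrArg Complex.re h
  have h := E2_S_transform halfPoint shiftPoint (by
    simp only [halfPoint, shiftPoint]
    field_simp
    linear_combination I_sq)
  rw [E2_shiftPoint] at h
  generalize E2 halfPoint = X at h ⊢
  simp only [halfPoint] at h
  field_simp at h ⊢
  linear_combination h / 2 + Real.pi * X * (1 + I / 2) * I_sq

lemma q_I : ((Real.exp (-(2 * Real.pi)) : ℝ) : ℂ) =
    cexp (2 * Real.pi * I * (UpperHalfPlane.I : ℂ)) := by
  rw [ofReal_exp]
  congr 1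
  push_cast
  linear_combination (-2 * Real.pi : ℂ) * I_sq

lemma q_halfPoint : ((-Real.exp (-Real.pi) : ℝ) : ℂ) =
    cexp (2 * Real.pi * I * (halfPoint : ℂ)) := by
  have : (2 * Real.pi * I * (halfPoint : ℂ)) = (-Real.pi : ℂ) + Real.pi * I := by
    simp only [halfPoint]
    linear_combination (Real.pi : ℂ) * I_sq
  rw [this, exp_add, exp_pi_mul_I]
  simp

theorem schlomilch_and_companion :
    (∑' n : ℕ, Real.exp (2 * Real.pi * (n + 1)) / (Real.exp (2 * Real.pi * (n + 1)) - 1) ^ 2) =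
      1 / 24 - 1 / (8 * Real.pi) ∧
    (∑' n : ℕ, Real.exp (Real.pi * (2 * (n + 1) - 1)) /
        (Real.exp (Real.pi * (2 * (n + 1) - 1)) + 1) ^ 2) =
      1 / (8 * Real.pi) := by
  have hpi : Real.pi ≠ 0 := Real.pi_ne_zero
  have h1 := hasSum_lambert _ _ q_I
  have h2 := hasSum_lambert _ _ q_halfPoint
  rw [E2_I] at h1
  rw [E2_halfPoint] at h2
  have h1 : HasSum (fun n : ℕ => Real.exp (-(2 * Real.pi)) ^ (n + 1) /
      (1 - Real.exp (-(2 * Real.pi)) ^ (n + 1)) ^ 2) ((1 - 3 / Real.pi) / 24) := by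
    exact_mod_cast h1
  have h2 : HasSum (fun n : ℕ => (-Real.exp (-Real.pi)) ^ (n + 1) /
      (1 - (-Real.exp (-Real.pi)) ^ (n + 1)) ^ 2) ((1 - 6 / Real.pi) / 24) := by
    exact_mod_cast h2
  constructor
  · convert h1.tsum_eq using 1
    · refine tsum_congr fun n => ?_
      rw [← Real.exp_nat_mul, show ((n + 1 : ℕ) : ℝ) * -(2 * Real.pi) =
        -(2 * Real.pi * (n + 1)) by push_cast; ring, Real.exp_neg]
      have : Real.exp (2 * Real.pi * (n + 1)) - 1 ≠ 0 := by
        have : 1 < Real.exp (2 * Real.pi * (n + 1)) := Real.one_lt_exp_iff.2 (by positivity)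
        linarith
      field_simp
    · field_simp
      ring
  · have hsq : (-Real.exp (-Real.pi)) ^ 2 = Real.exp (-(2 * Real.pi)) := by
      rw [neg_sq, ← Real.exp_nat_mul]
      congr 1
      push_cast
      ring
    have hev := (h2.summable.comp_injective
      (i := fun k : ℕ => 2 * k) (fun a b h => by simpa using h)).hasSum
    simp only [Function.comp_def] at hev
    have hod : HasSum (fun k : ℕ => (-Real.exp (-Real.pi)) ^ (2 * k + 1 + 1) /
        (1 - (-Real.exp (-Real.pi)) ^ (2 * k + 1 + 1)) ^ 2) ((1 - 3 / Real.pi) / 24) := by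
      convert h1 using 2 with k
      rw [show 2 * k + 1 + 1 = 2 * (k + 1) by ring, pow_mul, hsq]
    have hsplit := (HasSum.even_add_odd
      (f := fun n : ℕ => (-Real.exp (-Real.pi)) ^ (n + 1) /
        (1 - (-Real.exp (-Real.pi)) ^ (n + 1)) ^ 2) hev hod).unique h2
    have hterm : ∀ n : ℕ, Real.exp (Real.pi * (2 * (n + 1) - 1)) /
        (Real.exp (Real.pi * (2 * (n + 1) - 1)) + 1) ^ 2 =
        -((-Real.exp (-Real.pi)) ^ (2 * n + 1) /
          (1 - (-Real.exp (-Real.pi)) ^ (2 * n + 1)) ^ 2) := fun n => by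
      rw [(odd_two_mul_add_one n).neg_pow, ← Real.exp_nat_mul,
        show ((2 * n + 1 : ℕ) : ℝ) * -Real.pi = -(Real.pi * (2 * (n + 1) - 1)) by
          push_cast; ring, Real.exp_neg]
      have hpos := Real.exp_pos (Real.pi * (2 * (n + 1) - 1))
      generalize Real.exp (Real.pi * (2 * (n + 1) - 1)) = E at hpos ⊢
      have hE : 1 - -E⁻¹ = (E + 1) / E := by field_simp; ring
      rw [hE]
      field_simp
    rw [tsum_congr hterm, tsum_neg, eq_sub_of_add_eq hsplit]
    field_simp
    ring
end
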